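/- There exists an absolute constant C > 0 such that for every η > 0 and all Schwartz functions g, h : ℝ → ℂ satisfying η·h(z) + i·z·h(z) − h''(z) = g(z) for all z ∈ ℝ, one has ‖h‖_{L²(ℝ)} ≤ C·‖g‖_{L²(ℝ)}. In other words, the resolvent of the complex Airy operator i z − d²/dz² on L²(ℝ) is bounded uniformly with respect to the spectral parameter η ranging over the positive reals. -/

import Mathlib

open MeasureTheory
open scoped ENNReal

theorem airy_pointwise (η z a b p q r s u v φ φ' ψ : ℝ) (hη : 0 < η)
    (hφ : φ = z / (1 + z ^ 2)) (hφ1 : |φ| ≤ 1) (hφ' : |φ'| ≤ 1) (hψ : |ψ| ≤ 2)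
    (hr : r = η * a - z * b - u) (hs : s = η * b + z * a - v) :
    a ^ 2 + b ^ 2 ≤ 4 * (φ' * (q * a - p * b) + φ * (s * a - r * b) +
      (1 / (1 + z ^ 2)) * (a ^ 2 + b ^ 2) + ψ * (2 * a * p + 2 * b * q) +
      25 * (r * a + s * b + p ^ 2 + q ^ 2)) + 2504 * (u ^ 2 + v ^ 2) := by
  have h1 : φ * z + 1 / (1 + z ^ 2) = 1 := by
    rw [hφ]; have : (1 + z ^ 2) ≠ 0 := by positivity
    field_simp
    ring
  have e1 : φ * (s * a - r * b) + (1 / (1 + z ^ 2)) * (a ^ 2 + b ^ 2)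
      = (a ^ 2 + b ^ 2) - φ * (v * a - u * b) := by
    have : φ * (s * a - r * b) + (1 / (1 + z ^ 2)) * (a ^ 2 + b ^ 2)
      = (φ * z + 1 / (1 + z ^ 2)) * (a ^ 2 + b ^ 2) - φ * (v * a - u * b) := by
      rw [hr, hs]; ring
    rw [this, h1, one_mul]
  have e2 : r * a + s * b = η * (a ^ 2 + b ^ 2) - (u * a + v * b) := by
    rw [hr, hs]; ring
  have e3 : 0 ≤ η * (a ^ 2 + b ^ 2) := by positivity
  -- bounds of the error terms
  have t1 : -(φ' * (q * a - p * b)) ≤ 4 * (p ^ 2 + q ^ 2) + (a ^ 2 + b ^ 2) / 16 := by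
    have : φ' ^ 2 ≤ 1 := by nlinarith [abs_le.1 hφ']
    nlinarith [sq_nonneg (8 * φ' * q + a), sq_nonneg (8 * φ' * p - b),
      mul_le_mul_of_nonneg_right this (sq_nonneg p), mul_le_mul_of_nonneg_right this (sq_nonneg q)]
  have t2 : φ * (v * a - u * b) ≤ 2 * (u ^ 2 + v ^ 2) + (a ^ 2 + b ^ 2) / 8 := by
    have : φ ^ 2 ≤ 1 := by nlinarith [abs_le.1 hφ1]
    nlinarith [sq_nonneg (4 * φ * v - a), sq_nonneg (4 * φ * u + b),
      mul_le_mul_of_nonneg_right this (sq_nonneg u), mul_le_mul_of_nonneg_right this (sq_nonneg v)]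
  have t3 : -(ψ * (2 * a * p + 2 * b * q)) ≤ 16 * (p ^ 2 + q ^ 2) + (a ^ 2 + b ^ 2) / 4 := by
    have : ψ ^ 2 ≤ 4 := by nlinarith [abs_le.1 hψ]
    nlinarith [sq_nonneg (4 * ψ * p + a), sq_nonneg (4 * ψ * q + b),
      mul_le_mul_of_nonneg_right this (sq_nonneg p), mul_le_mul_of_nonneg_right this (sq_nonneg q)]
  have t4 : 25 * (u * a + v * b) ≤ 624 * (u ^ 2 + v ^ 2) + (a ^ 2 + b ^ 2) * (5 / 16) := by
    nlinarith [sq_nonneg (40 * u - a), sq_nonneg (40 * v - b), sq_nonneg u, sq_nonneg v]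
  linarith [sq_nonneg p, sq_nonneg q]

theorem airy_sq (η : ℝ) (hη : 0 < η) (g h : SchwartzMap ℝ ℂ)
    (heq : ∀ z : ℝ, (η : ℂ) * h z + Complex.I * (z : ℂ) * h z
            - deriv (deriv fun x : ℝ => h x) z = g z) :
    ∫ z, ‖h z‖ ^ 2 ≤ 2504 * ∫ z, ‖g z‖ ^ 2 := by
  set h1 := SchwartzMap.derivCLM ℂ ℂ h with hh1
  set h2 := SchwartzMap.derivCLM ℂ ℂ h1 with hh2
  have d0 : ∀ z, HasDerivAt (fun x => h x) (h1 z) z := fun z => by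
    simpa [hh1] using (h.differentiableAt (x := z)).hasDerivAt
  have d1 : ∀ z, HasDerivAt (fun x => h1 x) (h2 z) z := fun z => by
    have := (h1.differentiableAt (x := z)).hasDerivAt
    rwa [← SchwartzMap.derivCLM_apply ℂ] at this
  have dd : ∀ z, deriv (deriv fun x : ℝ => h x) z = h2 z := fun z => by
    have : (deriv fun x : ℝ => h x) = fun x => h1 x := funext fun x => (d0 x).deriv
    rw [this]; exact (d1 z).deriv
  have re' : ∀ {f : ℝ → ℂ} {f' : ℂ} {z : ℝ}, HasDerivAt f f' z →
      HasDerivAt (fun x => (f x).re) f'.re z := fun hf =>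
    (Complex.reCLM.hasFDerivAt.comp_hasDerivAt _ hf)
  have im' : ∀ {f : ℝ → ℂ} {f' : ℂ} {z : ℝ}, HasDerivAt f f' z →
      HasDerivAt (fun x => (f x).im) f'.im z := fun hf =>
    (Complex.imCLM.hasFDerivAt.comp_hasDerivAt _ hf)
  let F : ℝ → ℝ := fun z => z / (1 + z ^ 2) * ((h1 z).im * (h z).re - (h1 z).re * (h z).im) +
    Real.arctan z * ((h z).re ^ 2 + (h z).im ^ 2) +
    25 * ((h1 z).re * (h z).re + (h1 z).im * (h z).im)
  let F' : ℝ → ℝ := fun z => ((1 - z ^ 2) / (1 + z ^ 2) ^ 2) *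
      ((h1 z).im * (h z).re - (h1 z).re * (h z).im) +
    z / (1 + z ^ 2) * ((h2 z).im * (h z).re - (h2 z).re * (h z).im) +
    (1 / (1 + z ^ 2)) * ((h z).re ^ 2 + (h z).im ^ 2) +
    Real.arctan z * (2 * (h z).re * (h1 z).re + 2 * (h z).im * (h1 z).im) +
    25 * ((h2 z).re * (h z).re + (h2 z).im * (h z).im + (h1 z).re ^ 2 + (h1 z).im ^ 2)
  have hpos : ∀ z : ℝ, (1 + z ^ 2) ≠ 0 := fun z => by positivity
  have dF : ∀ z, HasDerivAt F (F' z) z := fun z => by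
    have hφ : HasDerivAt (fun z : ℝ => z / (1 + z ^ 2)) ((1 - z ^ 2) / (1 + z ^ 2) ^ 2) z := by
      have := (hasDerivAt_id z).div (((hasDerivAt_id z).pow 2).const_add 1) (hpos z)
      refine HasDerivAt.congr_deriv this ?_
      simp; ring
    have A := re' (d0 z)
    have B := im' (d0 z)
    have P := re' (d1 z)
    have Q := im' (d1 z)
    have := ((hφ.mul ((Q.mul A).sub (P.mul B))).add
      ((Real.hasDerivAt_arctan z).mul ((A.pow 2).add (B.pow 2)))).add
      (((P.mul A).add (Q.mul B)).const_mul 25)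
    refine HasDerivAt.congr_deriv this ?_
    simp [F']; ring
  have c0 : Continuous fun z => h z := h.continuous
  have c1 : Continuous fun z => h1 z := h1.continuous
  have c2 : Continuous fun z => h2 z := h2.continuous
  have cg : Continuous fun z => g z := g.continuous
  have cF' : Continuous F' := by
    have k1 : Continuous fun z : ℝ => (1 - z ^ 2) / (1 + z ^ 2) ^ 2 :=
      Continuous.div (by fun_prop) (by fun_prop) (fun z => pow_ne_zero 2 (hpos z))
    have k2 : Continuous fun z : ℝ => z / (1 + z ^ 2) :=
      Continuous.div (by fun_prop) (by fun_prop) hpos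
    have k3 : Continuous fun z : ℝ => 1 / (1 + z ^ 2) :=
      Continuous.div (by fun_prop) (by fun_prop) hpos
    have k4 := Real.continuous_arctan
    have := Complex.continuous_re.comp c0
    have := Complex.continuous_im.comp c0
    have := Complex.continuous_re.comp c1
    have := Complex.continuous_im.comp c1
    have := Complex.continuous_re.comp c2
    have := Complex.continuous_im.comp c2
    simp only [Function.comp_def] at *
    fun_prop
  have b1 : ∀ z : ℝ, |z / (1 + z ^ 2)| ≤ 1 := fun z => by
    rw [abs_div, abs_of_pos (show 0 < 1 + z ^ 2 by positivity), div_le_one (by positivity)]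
    nlinarith [sq_abs z, sq_nonneg (|z| - 1)]
  have b2 : ∀ z : ℝ, |(1 - z ^ 2) / (1 + z ^ 2) ^ 2| ≤ 1 := fun z => by
    rw [abs_div, abs_of_pos (show 0 < (1 + z ^ 2) ^ 2 by positivity), div_le_one (by positivity),
      abs_le]
    constructor <;> nlinarith [sq_nonneg z, sq_nonneg (z ^ 2)]
  have b3 : ∀ z : ℝ, |Real.arctan z| ≤ 2 := fun z => by
    rw [abs_le]
    constructor <;> linarith [Real.arctan_lt_pi_div_two z, Real.neg_pi_div_two_lt_arctan z,
      Real.pi_le_four]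
  have nsq : ∀ w : ℂ, ‖w‖ ^ 2 = w.re ^ 2 + w.im ^ 2 := fun w => by
    rw [Complex.sq_norm, Complex.normSq_apply]; ring
  have pw : ∀ z, ‖h z‖ ^ 2 ≤ 4 * F' z + 2504 * ‖g z‖ ^ 2 := fun z => by
    have e := heq z
    rw [dd] at e
    have er := congrArg Complex.re e
    have ei := congrArg Complex.im e
    simp at er ei
    rw [nsq, nsq]
    exact airy_pointwise η z _ _ _ _ _ _ _ _ _ _ _ hη rfl (b1 z) (b2 z) (b3 z)
      (by linarith) (by linarith)
  have Fb : ∀ z, |F z| ≤ 100 * (‖h z‖ ^ 2 + ‖h1 z‖ ^ 2) := fun z => by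
    have m1 : |(h1 z).im * (h z).re - (h1 z).re * (h z).im| ≤ (‖h z‖ ^ 2 + ‖h1 z‖ ^ 2) := by
      rw [nsq, nsq, abs_le]
      constructor <;> nlinarith [sq_nonneg ((h1 z).im - (h z).re), sq_nonneg ((h1 z).im + (h z).re),
        sq_nonneg ((h1 z).re - (h z).im), sq_nonneg ((h1 z).re + (h z).im)]
    have m2 : |(h z).re ^ 2 + (h z).im ^ 2| ≤ (‖h z‖ ^ 2 + ‖h1 z‖ ^ 2) := by
      rw [nsq, nsq, abs_of_nonneg (by positivity)]
      nlinarith [sq_nonneg (h1 z).re, sq_nonneg (h1 z).im]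
    have m3 : |(h1 z).re * (h z).re + (h1 z).im * (h z).im| ≤ (‖h z‖ ^ 2 + ‖h1 z‖ ^ 2) := by
      rw [nsq, nsq, abs_le]
      constructor <;> nlinarith [sq_nonneg ((h1 z).im - (h z).im), sq_nonneg ((h1 z).im + (h z).im),
        sq_nonneg ((h1 z).re - (h z).re), sq_nonneg ((h1 z).re + (h z).re)]
    have n1 := mul_le_mul (b1 z) m1 (abs_nonneg _) zero_le_one
    have n2 := mul_le_mul (b3 z) m2 (abs_nonneg _) zero_le_two
    rw [← abs_mul] at n1 n2
    have := abs_add_three (z / (1 + z ^ 2) * ((h1 z).im * (h z).re - (h1 z).re * (h z).im))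
      (Real.arctan z * ((h z).re ^ 2 + (h z).im ^ 2))
      (25 * ((h1 z).re * (h z).re + (h1 z).im * (h z).im))
    rw [abs_mul 25, abs_of_pos (show (0:ℝ) < 25 by norm_num)] at this
    have : 0 ≤ ‖h z‖ ^ 2 + ‖h1 z‖ ^ 2 := by positivity
    simp only [F]
    linarith
  have Ft : Filter.Tendsto F (Filter.cocompact ℝ) (nhds 0) := by
    refine squeeze_zero_norm Fb ?_
    have l0 : Filter.Tendsto (fun z => h z) (Filter.cocompact ℝ) (nhds 0) :=
      h.toZeroAtInfty.zero_at_infty'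
    have l1 : Filter.Tendsto (fun z => h1 z) (Filter.cocompact ℝ) (nhds 0) :=
      h1.toZeroAtInfty.zero_at_infty'
    simpa using ((l0.norm.pow 2).add (l1.norm.pow 2)).const_mul 100
  have Ftop := Ft.mono_left atTop_le_cocompact
  have Fbot := Ft.mono_left atBot_le_cocompact
  have ih : ∀ f : SchwartzMap ℝ ℂ, Integrable (fun z => ‖f z‖ ^ 2) volume := fun f =>
    (memLp_two_iff_integrable_sq_norm f.continuous.aestronglyMeasurable).1 (f.memLp 2 volume)
  have neg : Filter.Tendsto (fun R : ℝ => -R) Filter.atTop Filter.atBot :=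
    Filter.tendsto_neg_atTop_atBot
  have L := intervalIntegral_tendsto_integral (ih h) neg Filter.tendsto_id
  have M := (((Ftop.sub (Fbot.comp neg)).const_mul 4).add_const (2504 * ∫ z, ‖g z‖ ^ 2))
  simp only [sub_zero, mul_zero, zero_add] at M
  refine le_of_tendsto_of_tendsto L M ?_
  filter_upwards [Filter.eventually_ge_atTop (0:ℝ)] with R hR
  have hle : -R ≤ R := by linarith
  have i1 : IntervalIntegrable F' volume (-R) R := cF'.intervalIntegrable _ _
  have i2 : IntervalIntegrable (fun z => ‖g z‖ ^ 2) volume (-R) R := (ih g).intervalIntegrable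
  calc ∫ z in (-R)..R, ‖h z‖ ^ 2 ≤ ∫ z in (-R)..R, (4 * F' z + 2504 * ‖g z‖ ^ 2) :=
        intervalIntegral.integral_mono_on hle (ih h).intervalIntegrable
          ((i1.const_mul 4).add (i2.const_mul 2504)) (fun z _ => pw z)
    _ = 4 * (F R - F (-R)) + 2504 * ∫ z in (-R)..R, ‖g z‖ ^ 2 := by
        rw [intervalIntegral.integral_add (i1.const_mul 4) (i2.const_mul 2504),
          intervalIntegral.integral_const_mul, intervalIntegral.integral_const_mul,
          intervalIntegral.integral_eq_sub_of_hasDerivAt (fun z _ => dF z) i1]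
    _ ≤ _ := by
        have : ∫ z in (-R)..R, ‖g z‖ ^ 2 ≤ ∫ z, ‖g z‖ ^ 2 := by
          rw [intervalIntegral.integral_of_le hle]
          exact setIntegral_le_integral (ih g) (Filter.Eventually.of_forall fun z => by positivity)
        simp only [Function.comp]
        linarith

/-- Uniform resolvent bound for the complex Airy operator `i z − d²/dz²` on `L²(ℝ)`:
if `η h + i z h − h'' = g` with `η > 0`, then `‖h‖_{L²} ≤ C ‖g‖_{L²}` for an absolute
constant `C`. -/
theorem stmt2 :
    ∃ C : ℝ, 0 < C ∧
      ∀ η : ℝ, 0 < η →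
      ∀ g h : SchwartzMap ℝ ℂ,
        (∀ z : ℝ, (η : ℂ) * h z + Complex.I * (z : ℂ) * h z
            - deriv (deriv fun x : ℝ => h x) z = g z) →
        eLpNorm (fun z => h z) 2 volume ≤ ENNReal.ofReal C * eLpNorm (fun z => g z) 2 volume := by
  refine ⟨51, by norm_num, fun η hη g h heq => ?_⟩
  have key := airy_sq η hη g h heq
  have e : ∀ f : SchwartzMap ℝ ℂ, eLpNorm (fun z => f z) 2 volume =
      ENNReal.ofReal ((∫ z, ‖f z‖ ^ 2) ^ (1 / 2 : ℝ)) := fun f => by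
    have := (f.memLp 2 volume).eLpNorm_eq_integral_rpow_norm two_ne_zero ENNReal.ofNat_ne_top
    simpa using this
  rw [e, e, ← ENNReal.ofReal_mul (by norm_num)]
  apply ENNReal.ofReal_le_ofReal
  rw [← Real.sqrt_eq_rpow, ← Real.sqrt_eq_rpow]
  have hg : 0 ≤ ∫ z, ‖g z‖ ^ 2 := integral_nonneg fun z => by positivity
  apply Real.sqrt_le_iff.2 ⟨by positivity, ?_⟩
  rw [mul_pow, Real.sq_sqrt hg]
  linarith
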